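/- Let d ≥ 1 and let f, g : ℝ^d → [0, ∞) be integrable functions that are radial and nonincreasing in the radius; that is, there exist antitone functions f₀, g₀ : [0, ∞) → [0, ∞) with f(x) = f₀(|x|) and g(x) = g₀(|x|) for all x. Then the convolution (f * g)(x) = ∫_{ℝ^d} f(x − s) g(s) ds is also radial and nonincreasing in the radius: (f * g)(x) depends only on |x|, and |x| ≤ |y| implies (f * g)(x) ≥ (f * g)(y). -/

import Mathlib

open MeasureTheory

theorem refl_norm_identity {E : Type*} [NormedAddCommGroup E] [InnerProductSpace ℝ E]
    (x y s : E) (hxy : x ≠ y) (R : E ≃ₗᵢ[ℝ] E) (hR : R = (Submodule.span ℝ {x - y})ᗮ.reflection) :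
    (‖R s + (y - R x)‖ ^ 2 - ‖s‖ ^ 2) * ‖x - y‖ ^ 2
      = (‖x - s‖ ^ 2 - ‖y - s‖ ^ 2) * (‖x‖ ^ 2 - ‖y‖ ^ 2) := by
  have hv : ‖x - y‖ ^ 2 ≠ 0 := by
    have := sub_ne_zero.mpr hxy
    positivity
  have hv0 : ‖x - y‖ ≠ 0 := fun h => hv (by rw [h]; norm_num)
  obtain ⟨β, hβ⟩ : ∃ β : ℝ, β = (‖x - s‖ ^ 2 - ‖y - s‖ ^ 2) / ‖x - y‖ ^ 2 := ⟨_, rfl⟩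
  have h1 : R s + (y - R x) = s + β • (x - y) := by
    have hb : β = 2 * (inner ℝ (x - y) x / ‖x - y‖ ^ 2) - 2 * (inner ℝ (x - y) s / ‖x - y‖ ^ 2) - 1 := by
      rw [hβ]
      field_simp
      simp only [norm_sub_sq_real, inner_sub_left, real_inner_self_eq_norm_sq, real_inner_comm y x]
      ring
    rw [hb, hR, Submodule.reflection_orthogonal_apply, Submodule.reflection_orthogonal_apply,
      Submodule.reflection_singleton_apply, Submodule.reflection_singleton_apply]
    simp only [RCLike.ofReal_real_eq_id, id_eq]
    module
  have hβ' : β * ‖x - y‖ ^ 2 = ‖x - s‖ ^ 2 - ‖y - s‖ ^ 2 := by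
    rw [hβ]; field_simp
  have hc : 2 * inner ℝ s (x - y) + β * ‖x - y‖ ^ 2 = ‖x‖ ^ 2 - ‖y‖ ^ 2 := by
    rw [hβ', norm_sub_sq_real, norm_sub_sq_real, inner_sub_right, real_inner_comm x s,
      real_inner_comm y s]
    ring
  rw [h1, norm_add_sq_real, inner_smul_right, norm_smul, mul_pow, Real.norm_eq_abs, sq_abs,
    ← hβ', ← hc]
  ring

theorem convolution_of_radial_decreasing_is_radial_decreasing (d : ℕ) (hd : 1 ≤ d)
    (f g : EuclideanSpace ℝ (Fin d) → ℝ)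
    (hfint : Integrable f) (hgint : Integrable g)
    (hf0 : ∀ x, 0 ≤ f x) (hg0 : ∀ x, 0 ≤ g x)
    (f₀ g₀ : ℝ → ℝ)
    (hf₀ : AntitoneOn f₀ (Set.Ici 0)) (hg₀ : AntitoneOn g₀ (Set.Ici 0))
    (hfr : ∀ x, f x = f₀ ‖x‖) (hgr : ∀ x, g x = g₀ ‖x‖) :
    (∀ x y : EuclideanSpace ℝ (Fin d), ‖x‖ = ‖y‖ →
      (∫ s, f (x - s) * g s) = ∫ s, f (y - s) * g s) ∧
    (∀ x y : EuclideanSpace ℝ (Fin d), ‖x‖ ≤ ‖y‖ →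
      (∫ s, f (y - s) * g s) ≤ ∫ s, f (x - s) * g s) := by
  have hi : ∀ x, Integrable (fun s => f (x - s) * g s) := by
    intro x
    refine hgint.bdd_mul (c := f₀ 0) (hfint.comp_sub_left x).aestronglyMeasurable ?_
    refine Filter.Eventually.of_forall fun s => ?_
    rw [Real.norm_of_nonneg (hf0 _), hfr]
    exact hf₀ (Set.mem_Ici.2 le_rfl) (norm_nonneg _) (norm_nonneg _)
  have key : ∀ x y : EuclideanSpace ℝ (Fin d), ‖x‖ ≤ ‖y‖ →
      (∫ s, f (y - s) * g s) ≤ ∫ s, f (x - s) * g s := by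
    intro x y hxy
    rcases eq_or_ne x y with rfl | hne
    · exact le_rfl
    obtain ⟨R, hR⟩ : ∃ R : EuclideanSpace ℝ (Fin d) ≃ₗᵢ[ℝ] EuclideanSpace ℝ (Fin d),
      R = (Submodule.span ℝ {x - y})ᗮ.reflection := ⟨_, rfl⟩
    have hRv : R x - R y = y - x := by
      rw [← map_sub, hR, Submodule.reflection_orthogonalComplement_singleton_eq_neg, neg_sub]
    have hmp : MeasurePreserving (fun s => R s + (y - R x)) volume volume :=
      (measurePreserving_add_right volume (y - R x)).comp R.measurePreserving
    have hme : MeasurableEmbedding (fun s => R s + (y - R x)) :=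
      (measurableEmbedding_addRight (y - R x)).comp R.toHomeomorph.measurableEmbedding
    have e1 : ∀ s, f (x - (R s + (y - R x))) = f (y - s) := by
      intro s
      have : x - (R s + (y - R x)) = R (y - s) := by
        rw [map_sub, ← sub_eq_zero]
        have h := sub_eq_zero.2 hRv
        rw [← h]; abel
      rw [this, hfr, hfr, R.norm_map]
    have e2 : ∀ s, f (y - (R s + (y - R x))) = f (x - s) := by
      intro s
      have : y - (R s + (y - R x)) = R (x - s) := by
        rw [map_sub]; abel
      rw [this, hfr, hfr, R.norm_map]
    have A := hmp.integral_comp hme (fun s => f (x - s) * g s)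
    have B := hmp.integral_comp hme (fun s => f (y - s) * g s)
    have iA := hmp.integrable_comp_of_integrable (hi x)
    have iB := hmp.integrable_comp_of_integrable (hi y)
    simp only [Function.comp_def, e1, e2] at A B iA iB
    have hmono : ∫ s, (f (y - s) * g s + f (x - s) * g (R s + (y - R x)))
        ≤ ∫ s, (f (x - s) * g s + f (y - s) * g (R s + (y - R x))) := by
      refine integral_mono ((hi y).add iB) ((hi x).add iA) fun s => ?_
      have hid := refl_norm_identity x y s hne R hR
      have hv : 0 < ‖x - y‖ ^ 2 := by
        have := sub_ne_zero.mpr hne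
        positivity
      have hq : ‖x‖ ^ 2 - ‖y‖ ^ 2 ≤ 0 := by
        have := pow_le_pow_left₀ (norm_nonneg x) hxy 2
        linarith
      rcases le_total ‖x - s‖ ‖y - s‖ with h | h
      · have h2 : ‖s‖ ≤ ‖R s + (y - R x)‖ := by
          have := pow_le_pow_left₀ (norm_nonneg _) h 2
          refine (sq_le_sq₀ (norm_nonneg _) (norm_nonneg _)).1 ?_
          by_contra! hc
          nlinarith [mul_nonneg_of_nonpos_of_nonpos (sub_nonpos.2 this) hq,
            mul_pos (sub_pos.2 hc) hv]
        have hf : f (y - s) ≤ f (x - s) := by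
          rw [hfr, hfr]; exact hf₀ (norm_nonneg _) (norm_nonneg _) h
        have hg : g (R s + (y - R x)) ≤ g s := by
          rw [hgr, hgr s]; exact hg₀ (norm_nonneg _) (norm_nonneg _) h2
        nlinarith [mul_nonneg (sub_nonneg.2 hf) (sub_nonneg.2 hg)]
      · have h2 : ‖R s + (y - R x)‖ ≤ ‖s‖ := by
          have := pow_le_pow_left₀ (norm_nonneg _) h 2
          refine (sq_le_sq₀ (norm_nonneg _) (norm_nonneg _)).1 ?_
          by_contra! hc
          nlinarith [mul_nonneg_of_nonpos_of_nonpos (sub_nonpos.2 this) hq,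
            mul_pos (sub_pos.2 hc) hv]
        have hf : f (x - s) ≤ f (y - s) := by
          rw [hfr, hfr]; exact hf₀ (norm_nonneg _) (norm_nonneg _) h
        have hg : g s ≤ g (R s + (y - R x)) := by
          rw [hgr, hgr (R s + (y - R x))]; exact hg₀ (norm_nonneg _) (norm_nonneg _) h2
        nlinarith [mul_nonneg (sub_nonneg.2 hf) (sub_nonneg.2 hg)]
    rw [integral_add (hi y) iB, integral_add (hi x) iA, A, B] at hmono
    linarith
  exact ⟨fun x y h => le_antisymm (key y x h.ge) (key x y h.le), key⟩
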